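/- Let E_{k-2}, E_{k-1}, E_k, E_{k+1} be finite types with positive weights μ_{k-2}, μ_{k-1}, μ_k, μ_{k+1} (all values > 0) and parity functions between each pair of consecutive levels (values in {-1,0,1}), satisfying the cocycle condition ∑ sgn·sgn = 0 on both triples (E_{k-2},E_{k-1},E_k) and (E_{k-1},E_k,E_{k+1}). Let d_j, δ_j be the deRham and dual derivatives. Suppose F : E_k → ℂ satisfies F = d_{k-1} g for some g : E_{k-1} → ℂ, and (δ_{k+1} ∘ d_k + d_{k-1} ∘ δ_k) F = λ F for some λ ∈ ℂ. Then δ_k F is an eigenfunction of the Laplacian on (k-1)-forms with the same eigenvalue: (δ_k ∘ d_{k-1} + d_{k-2} ∘ δ_{k-1})(δ_k F) = λ · (δ_k F). -/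

import Mathlib

/-!
The cocycle condition gives `d ∘ d = 0` (`dDeriv_dDeriv`) and `δ ∘ δ = 0`
(`deltaDeriv_deltaDeriv`). As `F = d g`, the term `δ d F` of the Laplacian vanishes, so the
eigenvalue equation reads `d δ F = λ F`. Applying `δ` gives `δ d (δ F) = λ δ F`, and the
remaining term `d δ (δ F)` is zero.
-/

/-- The deRham derivative `d` on graph forms:
`d f (e_{k}) = ∑_{e_{k-1}} sgn(e_{k-1}, e_k) f(e_{k-1})`. -/
noncomputable def dDeriv {A B : Type*} [Fintype A] (sgn : A → B → ℤ) (f : A → ℂ) : B → ℂ :=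
  fun b => ∑ a : A, (sgn a b : ℂ) * f a

/-- The dual deRham derivative `δ` on weighted graph forms:
`δ f (e_{k-1}) = ∑_{e_k} (μ_k(e_k)/μ_{k-1}(e_{k-1})) sgn(e_{k-1}, e_k) f(e_k)`. -/
noncomputable def deltaDeriv {A B : Type*} [Fintype B] (μA : A → ℝ) (μB : B → ℝ)
    (sgn : A → B → ℤ) (f : B → ℂ) : A → ℂ :=
  fun a => ∑ b : B, ((μB b / μA a : ℝ) : ℂ) * (sgn a b : ℂ) * f b

/-- The weighted inner product `⟨f, g⟩ = ∑_e μ(e) f(e) conj(g(e))`. -/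
noncomputable def ip {A : Type*} [Fintype A] (μ : A → ℝ) (f g : A → ℂ) : ℂ :=
  ∑ a : A, (μ a : ℂ) * f a * (starRingEnd ℂ) (g a)

/-- `d ∘ d = 0`, by the cocycle condition. -/
lemma dDeriv_dDeriv {A B C : Type*} [Fintype A] [Fintype B]
    (s : A → B → ℤ) (t : B → C → ℤ)
    (hcoc : ∀ a c, ∑ b : B, s a b * t b c = 0) (f : A → ℂ) :
    dDeriv t (dDeriv s f) = 0 := by
  funext c
  simp only [dDeriv, Finset.mul_sum, Pi.zero_apply]
  rw [Finset.sum_comm]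
  refine Finset.sum_eq_zero fun a _ => ?_
  have h : ∑ b : B, (s a b : ℂ) * (t b c : ℂ) = 0 := by exact_mod_cast hcoc a c
  calc ∑ b : B, (t b c : ℂ) * ((s a b : ℂ) * f a)
      = (∑ b : B, (s a b : ℂ) * (t b c : ℂ)) * f a := by
        rw [Finset.sum_mul]
        exact Finset.sum_congr rfl fun b _ => by ring
    _ = 0 := by rw [h, zero_mul]

/-- `δ ∘ δ = 0`: the middle weight cancels, being nonzero, so that the cocycle condition applies. -/
lemma deltaDeriv_deltaDeriv {A B C : Type*} [Fintype B] [Fintype C]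
    (μA : A → ℝ) (μB : B → ℝ) (μC : C → ℝ) (hμB : ∀ b, 0 < μB b)
    (s : A → B → ℤ) (t : B → C → ℤ)
    (hcoc : ∀ a c, ∑ b : B, s a b * t b c = 0) (f : C → ℂ) :
    deltaDeriv μA μB s (deltaDeriv μB μC t f) = 0 := by
  funext a
  simp only [deltaDeriv, Finset.mul_sum, Pi.zero_apply]
  rw [Finset.sum_comm]
  refine Finset.sum_eq_zero fun c _ => ?_
  have h : ∑ b : B, (s a b : ℂ) * (t b c : ℂ) = 0 := by exact_mod_cast hcoc a c
  calc ∑ b : B, ((μB b / μA a : ℝ) : ℂ) * (s a b : ℂ) *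
          (((μC c / μB b : ℝ) : ℂ) * (t b c : ℂ) * f c)
      = (∑ b : B, (s a b : ℂ) * (t b c : ℂ)) * (((μC c / μA a : ℝ) : ℂ) * f c) := by
        rw [Finset.sum_mul]
        refine Finset.sum_congr rfl fun b _ => ?_
        have hw : ((μB b / μA a : ℝ) : ℂ) * ((μC c / μB b : ℝ) : ℂ)
            = ((μC c / μA a : ℝ) : ℂ) := by
          rw [← Complex.ofReal_mul, mul_comm, div_mul_div_cancel₀ (hμB b).ne']
        rw [← hw]
        ring
    _ = 0 := by rw [h, zero_mul]

lemma dDeriv_zero {A B : Type*} [Fintype A] (s : A → B → ℤ) :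
    dDeriv s (0 : A → ℂ) = 0 := by
  funext b
  simp [dDeriv]

lemma deltaDeriv_zero {A B : Type*} [Fintype B] (μA : A → ℝ) (μB : B → ℝ) (s : A → B → ℤ) :
    deltaDeriv μA μB s (0 : B → ℂ) = 0 := by
  funext a
  simp [deltaDeriv]

lemma deltaDeriv_smul {A B : Type*} [Fintype B] (μA : A → ℝ) (μB : B → ℝ) (s : A → B → ℤ)
    (z : ℂ) (f : B → ℂ) :
    deltaDeriv μA μB s (z • f) = z • deltaDeriv μA μB s f := by
  funext a
  simp only [deltaDeriv, Pi.smul_apply, smul_eq_mul, Finset.mul_sum]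
  exact Finset.sum_congr rfl fun b _ => by ring

/-- If `F` lies in the range of `d_{k-1}` and is a `λ`-eigenfunction
of the Laplacian on `k`-forms, then `δ_k F` is a `λ`-eigenfunction of the Laplacian on
`(k-1)`-forms. -/
theorem d_spectrum_maps_to_delta_spectrum
    {Ekm2 Ekm1 Ek Ekp1 : Type*}
    [Fintype Ekm2] [Fintype Ekm1] [Fintype Ek] [Fintype Ekp1]
    (μkm2 : Ekm2 → ℝ) (μkm1 : Ekm1 → ℝ) (μk : Ek → ℝ) (μkp1 : Ekp1 → ℝ)
    (hμkm2 : ∀ a, 0 < μkm2 a) (hμkm1 : ∀ a, 0 < μkm1 a)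
    (hμk : ∀ b, 0 < μk b) (hμkp1 : ∀ c, 0 < μkp1 c)
    (sgn₀ : Ekm2 → Ekm1 → ℤ) (sgn₁ : Ekm1 → Ek → ℤ) (sgn₂ : Ek → Ekp1 → ℤ)
    (hsgn₀ : ∀ a b, sgn₀ a b = -1 ∨ sgn₀ a b = 0 ∨ sgn₀ a b = 1)
    (hsgn₁ : ∀ a b, sgn₁ a b = -1 ∨ sgn₁ a b = 0 ∨ sgn₁ a b = 1)
    (hsgn₂ : ∀ b c, sgn₂ b c = -1 ∨ sgn₂ b c = 0 ∨ sgn₂ b c = 1)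
    (hcoc₁ : ∀ (a : Ekm2) (c : Ek), ∑ b : Ekm1, sgn₀ a b * sgn₁ b c = 0)
    (hcoc₂ : ∀ (a : Ekm1) (c : Ekp1), ∑ b : Ek, sgn₁ a b * sgn₂ b c = 0)
    (F : Ek → ℂ) (g : Ekm1 → ℂ) (hF : F = dDeriv sgn₁ g)
    (lam : ℂ)
    (heig : deltaDeriv μk μkp1 sgn₂ (dDeriv sgn₂ F) +
        dDeriv sgn₁ (deltaDeriv μkm1 μk sgn₁ F) = lam • F) :
    deltaDeriv μkm1 μk sgn₁ (dDeriv sgn₁ (deltaDeriv μkm1 μk sgn₁ F)) +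
        dDeriv sgn₀ (deltaDeriv μkm2 μkm1 sgn₀ (deltaDeriv μkm1 μk sgn₁ F)) =
      lam • deltaDeriv μkm1 μk sgn₁ F := by
  have hdF : dDeriv sgn₂ F = 0 := by
    rw [hF]
    exact dDeriv_dDeriv sgn₁ sgn₂ hcoc₂ g
  rw [hdF, deltaDeriv_zero, zero_add] at heig
  rw [heig, deltaDeriv_smul, deltaDeriv_deltaDeriv μkm2 μkm1 μk hμkm1 sgn₀ sgn₁ hcoc₁ F,
    dDeriv_zero, add_zero]
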